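/- (Strict convexity of KL_inf for bounded distributions.) For every probability distribution ν supported on [0,1] with mean m(ν) ∈ (0,1), the map x ↦ KL_inf^U(ν,B,x) is strictly convex on (m(ν), 1], and the map x ↦ KL_inf^L(ν,B,x) is strictly convex on [0, m(ν)). -/

import Mathlib

open MeasureTheory ProbabilityTheory Filter Set
open scoped ENNReal

noncomputable section
open scoped Classical

/-- `B`: the family of probability distributions supported on `[0,1]`. -/
def Bset : Set (Measure ℝ) := {κ | IsProbabilityMeasure κ ∧ κ (Set.Icc (0:ℝ) 1)ᶜ = 0}

/-- The mean `m(κ)` of a distribution `κ`. -/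
def mmean (κ : Measure ℝ) : ℝ := ∫ x, x ∂κ

/-- KL divergence, valued in `[0,∞]`: `∫ log(dμ/dν) dμ` when `μ ≪ ν` and this integral is
finite, and `∞` otherwise. -/
def KLdiv (μ ν : Measure ℝ) : ℝ≥0∞ :=
  if μ ≪ ν ∧ Integrable (llr μ ν) μ then ENNReal.ofReal (∫ x, llr μ ν x ∂μ) else ⊤

/-- `KL_inf^U(ν,B,x) = inf{ KL(ν,κ) : κ ∈ B, m(κ) ≥ x }`. -/
def KLinfU (ν : Measure ℝ) (x : ℝ) : ℝ≥0∞ :=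
  ⨅ κ ∈ {κ ∈ Bset | x ≤ mmean κ}, KLdiv ν κ

/-- `KL_inf^L(ν,B,x) = inf{ KL(ν,κ) : κ ∈ B, m(κ) ≤ x }`. -/
def KLinfL (ν : Measure ℝ) (x : ℝ) : ℝ≥0∞ :=
  ⨅ κ ∈ {κ ∈ Bset | mmean κ ≤ x}, KLdiv ν κ

/-- `KL_inf(ν,B,x)`: equals `KL_inf^U` for `x ≥ m(ν)` and `KL_inf^L` for `x < m(ν)`. -/
def KLinf (ν : Measure ℝ) (x : ℝ) : ℝ≥0∞ :=
  if mmean ν ≤ x then KLinfU ν x else KLinfL ν x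

/-
A strictly convex minorant of `KL_inf^U` touching it at each `z` strictly between the mean and the
right endpoint gives strict convexity there. Weak duality supplies minorants: Jensen's inequality
for `log` bounds `KL(ν, κ)` below by `∫ log (1 - l (t - z)) dν - log (1 + l (z - x))` whenever `κ`
has mean at least `x`, for every multiplier `l > 0` such that `1 - l (t - z)` is nonnegative on the
support. The minorant touches at `z` when `l` maximizes the concave dual objective
`∫ log (1 - l (t - z)) dν`: the measure `ν / (1 - l (t - z))`, its missing mass (if any) put at the
right endpoint, then has mean `z` and attains the bound. At the right endpoint itself `KL_inf^U` is
infinite, and `KL_inf^L` is `KL_inf^U` after a reflection.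
-/

open InformationTheory
open scoped NNReal Topology

section StrictConvexity

lemma strictConvexOn_of_strictConvexOn_minorant {E : Type*} [AddCommGroup E] [Module ℝ E]
    {s : Set E} {f : E → ℝ≥0∞} (hs : Convex ℝ s)
    (h : ∀ z ∈ s, ∃ g : E → ℝ, StrictConvexOn ℝ s g ∧ 0 ≤ g z ∧ f z ≤ ENNReal.ofReal (g z) ∧
      ∀ x ∈ s, ENNReal.ofReal (g x) ≤ f x) :
    StrictConvexOn ℝ≥0 s f := by
  refine ⟨NNReal.convex_iff.2 hs, fun x hx y hy hxy a b ha hb hab => ?_⟩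
  have hab' : (a : ℝ) + b = 1 := mod_cast hab
  obtain ⟨g, hg, hgz, hfz, hgf⟩ := h _ (hs hx hy a.2 b.2 hab')
  have hlt := hg.2 hx hy hxy (NNReal.coe_pos.2 ha) (NNReal.coe_pos.2 hb) hab'
  calc f (a • x + b • y)
      ≤ ENNReal.ofReal (g ((a : ℝ) • x + (b : ℝ) • y)) := hfz
    _ < ENNReal.ofReal (a * g x + b * g y) :=
        (ENNReal.ofReal_lt_ofReal_iff (hgz.trans_lt hlt)).2 hlt
    _ ≤ ENNReal.ofReal (a * g x) + ENNReal.ofReal (b * g y) := ENNReal.ofReal_add_le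
    _ = a • ENNReal.ofReal (g x) + b • ENNReal.ofReal (g y) := by
        rw [ENNReal.ofReal_mul a.coe_nonneg, ENNReal.ofReal_mul b.coe_nonneg]
        simp only [ENNReal.ofReal_coe_nnreal, ENNReal.smul_def, smul_eq_mul]
    _ ≤ a • f x + b • f y := by gcongr <;> exact hgf _ ‹_›

lemma strictConvexOn_Ioc_of_eq_top {f : ℝ → ℝ≥0∞} {m q : ℝ} (hf : StrictConvexOn ℝ≥0 (Ioo m q) f)
    (hfin : ∀ x ∈ Ioo m q, f x ≠ ⊤) (hq : f q = ⊤) : StrictConvexOn ℝ≥0 (Ioc m q) f := by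
  refine LinearOrder.strictConvexOn_of_lt (convex_Ioc m q) fun x hx y hy hxy a b ha hb hab => ?_
  have hx' : x ∈ Ioo m q := ⟨hx.1, hxy.trans_le hy.2⟩
  rcases hy.2.lt_or_eq with hyq | rfl
  · exact hf.2 hx' ⟨hy.1, hyq⟩ hxy.ne ha hb hab
  · have hab' : (a : ℝ) + b = 1 := mod_cast hab
    have hseg : (a : ℝ) • x + (b : ℝ) • y ∈ Ioo x y := by
      rw [← openSegment_eq_Ioo hxy]
      exact ⟨a, b, ha, hb, hab', rfl⟩
    have hmem : (a : ℝ) • x + (b : ℝ) • y ∈ Ioo m y := ⟨hx.1.trans hseg.1, hseg.2⟩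
    have hbtop : b • f y = ⊤ := by
      rw [hq, ENNReal.smul_top, if_neg hb.ne']
    rw [hbtop, add_top]
    exact (hfin _ hmem).lt_top

lemma strictConvexOn_Ico_comp_neg {f : ℝ → ℝ≥0∞} {m p : ℝ}
    (hf : StrictConvexOn ℝ≥0 (Ioc (-m) (-p)) f) :
    StrictConvexOn ℝ≥0 (Ico p m) fun x => f (-x) := by
  refine ⟨convex_Ico p m, fun x hx y hy hxy a b ha hb hab => ?_⟩
  have hneg : -(a • x + b • y) = a • -x + b • -y := by simp only [smul_neg, neg_add]
  simpa only [hneg] using hf.2 ⟨neg_lt_neg hx.2, neg_le_neg hx.1⟩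
    ⟨neg_lt_neg hy.2, neg_le_neg hy.1⟩ (neg_injective.ne hxy) ha hb hab

lemma strictConvexOn_const_sub_log_affine {s : Set ℝ} {A l z : ℝ} (hs : Convex ℝ s) (hl : l ≠ 0)
    (hpos : ∀ x ∈ s, 0 < 1 + l * (z - x)) :
    StrictConvexOn ℝ s fun x => A - Real.log (1 + l * (z - x)) := by
  refine ⟨hs, fun x hx y hy hxy a b ha hb hab => ?_⟩
  have hne : 1 + l * (z - x) ≠ 1 + l * (z - y) := by
    simpa [hl] using hxy
  have hcombo : a • (1 + l * (z - x)) + b • (1 + l * (z - y)) =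
      1 + l * (z - (a • x + b • y)) := by
    simp only [smul_eq_mul]
    linear_combination (1 + l * z) * hab
  have hlog := strictConcaveOn_log_Ioi.2 (hpos x hx) (hpos y hy) hne ha hb hab
  rw [hcombo] at hlog
  simp only [smul_eq_mul] at hlog ⊢
  linear_combination hlog - A * hab

end StrictConvexity

section LogIntegral

variable {α : Type*} {mα : MeasurableSpace α} {μ : Measure α} {f : α → ℝ}

lemma integral_pos_of_ae_pos [NeZero μ] (hf : Integrable f μ) (hpos : ∀ᵐ t ∂μ, 0 < f t) :
    0 < ∫ t, f t ∂μ := by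
  have hsupport : μ (Function.support f) = μ univ := measure_congr <| eventuallyEq_set.2 <| by
    filter_upwards [hpos] with t ht
    simpa using ht.ne'
  rw [integral_pos_iff_support_of_nonneg_ae (hpos.mono fun _ => le_of_lt) hf, hsupport]
  exact Measure.measure_univ_pos.2 (NeZero.ne μ)

/- Jensen's inequality in Mathlib asks for a closed set; `log` is continuous only on `(0, ∞)`, so
the tangent of `log` at the mean is used directly. -/
lemma integral_log_le_log_integral [IsProbabilityMeasure μ] (hf : Integrable f μ)
    (hpos : ∀ᵐ t ∂μ, 0 < f t) (hlog : Integrable (fun t => Real.log (f t)) μ) :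
    ∫ t, Real.log (f t) ∂μ ≤ Real.log (∫ t, f t ∂μ) := by
  set c := ∫ t, f t ∂μ
  have hcpos : 0 < c := integral_pos_of_ae_pos hf hpos
  have htangent : ∀ᵐ t ∂μ, Real.log (f t) ≤ (Real.log c - 1) + c⁻¹ * f t := by
    filter_upwards [hpos] with t ht
    have h := Real.log_le_sub_one_of_pos (mul_pos (inv_pos.2 hcpos) ht)
    rw [Real.log_mul (inv_pos.2 hcpos).ne' ht.ne', Real.log_inv] at h
    linarith
  calc ∫ t, Real.log (f t) ∂μ
      ≤ ∫ t, ((Real.log c - 1) + c⁻¹ * f t) ∂μ :=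
        integral_mono_ae hlog ((integrable_const _).add (hf.const_mul _)) htangent
    _ = (Real.log c - 1) + c⁻¹ * c := by
        rw [integral_add (integrable_const _) (hf.const_mul _), integral_const_mul,
          integral_const, probReal_univ, one_smul]
    _ = Real.log c := by rw [inv_mul_cancel₀ hcpos.ne']; ring

lemma integrable_log_of_integrable_inv (hf : Integrable f μ)
    (hinv : Integrable (fun t => (f t)⁻¹) μ) (hpos : ∀ᵐ t ∂μ, 0 < f t) :
    Integrable (fun t => Real.log (f t)) μ := by
  refine (hf.add hinv).mono' hf.aemeasurable.log.aestronglyMeasurable ?_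
  filter_upwards [hpos] with t ht
  have hupper := Real.log_le_sub_one_of_pos ht
  have hlower := Real.one_sub_inv_le_log_of_pos ht
  have hinv_pos := inv_pos.2 ht
  rw [Real.norm_eq_abs, abs_le, Pi.add_apply]
  constructor <;> linarith

lemma ae_pos_of_lintegral_inv_ofReal_ne_top (hf : AEMeasurable f μ)
    (h : ∫⁻ t, (ENNReal.ofReal (f t))⁻¹ ∂μ ≠ ⊤) : ∀ᵐ t ∂μ, 0 < f t := by
  filter_upwards [ae_lt_top' hf.ennreal_ofReal.inv h] with t ht
  simpa using ht

lemma integrable_inv_of_lintegral_inv_ofReal_ne_top (hf : AEMeasurable f μ)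
    (h : ∫⁻ t, (ENNReal.ofReal (f t))⁻¹ ∂μ ≠ ⊤) : Integrable (fun t => (f t)⁻¹) μ := by
  refine (integrable_toReal_of_lintegral_ne_top hf.ennreal_ofReal.inv h).congr ?_
  filter_upwards [ae_pos_of_lintegral_inv_ofReal_ne_top hf h] with t ht
  rw [Pi.inv_apply, ENNReal.toReal_inv, ENNReal.toReal_ofReal ht.le]

end LogIntegral

section KullbackLeibler

variable {α : Type*} {mα : MeasurableSpace α} {ν κ : Measure α} {g : α → ℝ}

lemma integrable_rnDeriv_mul_of_integrable [SigmaFinite κ] (hg : Integrable g κ) :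
    Integrable (fun t => (κ.rnDeriv ν t).toReal * g t) ν :=
  (integrable_withDensity_iff_integrable_smul' (Measure.measurable_rnDeriv κ ν)
    (Measure.rnDeriv_lt_top κ ν)).1 (hg.mono_measure (Measure.withDensity_rnDeriv_le κ ν))

lemma integral_rnDeriv_mul_le [SigmaFinite κ] (hg : Integrable g κ) (hg0 : 0 ≤ᵐ[κ] g) :
    ∫ t, (κ.rnDeriv ν t).toReal * g t ∂ν ≤ ∫ t, g t ∂κ :=
  calc ∫ t, (κ.rnDeriv ν t).toReal * g t ∂ν
      = ∫ t, g t ∂(ν.withDensity (κ.rnDeriv ν)) :=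
        (integral_withDensity_eq_integral_toReal_smul (Measure.measurable_rnDeriv κ ν)
          (Measure.rnDeriv_lt_top κ ν) g).symm
    _ ≤ ∫ t, g t ∂κ := integral_mono_measure (Measure.withDensity_rnDeriv_le κ ν) hg0 hg

/- Jensen's inequality for `log` applied to `(dκ/dν) g`, whose logarithm is
`log g - log (dν/dκ)`. -/
lemma integral_log_sub_log_integral_le_integral_llr [IsProbabilityMeasure ν] [SigmaFinite κ]
    (hac : ν ≪ κ) (hllr : Integrable (llr ν κ) ν) (hg : Integrable g κ) (hg0 : 0 ≤ᵐ[κ] g)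
    (hpos : ∀ᵐ t ∂ν, 0 < g t) (hlog : Integrable (fun t => Real.log (g t)) ν) {D : ℝ}
    (hD : ∫ t, g t ∂κ ≤ D) :
    (∫ t, Real.log (g t) ∂ν) - Real.log D ≤ ∫ t, llr ν κ t ∂ν := by
  set h : α → ℝ := fun t => (κ.rnDeriv ν t).toReal * g t
  have hρ : ∀ᵐ t ∂ν, 0 < (κ.rnDeriv ν t).toReal := by
    filter_upwards [Measure.rnDeriv_pos' hac, Measure.rnDeriv_lt_top κ ν] with t h0 htop
    exact ENNReal.toReal_pos h0.ne' htop.ne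
  have hh : Integrable h ν := integrable_rnDeriv_mul_of_integrable hg
  have hhpos : ∀ᵐ t ∂ν, 0 < h t := by
    filter_upwards [hρ, hpos] with t using mul_pos
  have hlogh : (fun t => Real.log (h t)) =ᵐ[ν] fun t => Real.log (g t) - llr ν κ t := by
    filter_upwards [hρ, hpos, neg_llr hac] with t hρt hgt hllrt
    rw [Real.log_mul hρt.ne' hgt.ne', ← llr, ← hllrt, Pi.neg_apply]
    ring
  have hjensen : ∫ t, Real.log (h t) ∂ν ≤ Real.log (∫ t, h t ∂ν) :=
    integral_log_le_log_integral hh hhpos ((hlog.sub hllr).congr hlogh.symm)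
  have hmono : Real.log (∫ t, h t ∂ν) ≤ Real.log D :=
    Real.log_le_log (integral_pos_of_ae_pos hh hhpos) ((integral_rnDeriv_mul_le hg hg0).trans hD)
  rw [integral_congr_ae hlogh, integral_sub hlog hllr] at hjensen
  linarith

lemma ofReal_integral_log_sub_log_integral_le_klDiv [IsProbabilityMeasure ν]
    [IsProbabilityMeasure κ] (hg : Integrable g κ) (hg0 : 0 ≤ᵐ[κ] g) (hpos : ∀ᵐ t ∂ν, 0 < g t)
    (hlog : Integrable (fun t => Real.log (g t)) ν) {D : ℝ} (hD : ∫ t, g t ∂κ ≤ D) :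
    ENNReal.ofReal ((∫ t, Real.log (g t) ∂ν) - Real.log D) ≤ klDiv ν κ := by
  by_cases htop : klDiv ν κ = ⊤
  · exact htop ▸ le_top
  obtain ⟨hac, hllr⟩ := klDiv_ne_top_iff.1 htop
  rw [← ENNReal.ofReal_toReal htop, toReal_klDiv_of_measure_eq hac (by simp)]
  exact ENNReal.ofReal_le_ofReal
    (integral_log_sub_log_integral_le_integral_llr hac hllr hg hg0 hpos hlog hD)

lemma llr_ae_eq_log_of_withDensity_eq [SigmaFinite κ] (hg : Measurable g)
    (hpos : ∀ᵐ t ∂ν, 0 < g t) (h : κ.withDensity (fun t => ENNReal.ofReal (g t)) = ν) :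
    llr ν κ =ᵐ[ν] fun t => Real.log (g t) := by
  have hac : ν ≪ κ := h ▸ withDensity_absolutelyContinuous _ _
  have hrn : ν.rnDeriv κ =ᵐ[κ] fun t => ENNReal.ofReal (g t) :=
    h ▸ Measure.rnDeriv_withDensity κ hg.ennreal_ofReal
  filter_upwards [hac.ae_eq hrn, hpos] with t ht htpos
  rw [llr, ht, ENNReal.toReal_ofReal htpos.le]

lemma lintegral_ofReal_eq_one_of_withDensity_eq [IsProbabilityMeasure ν]
    (h : κ.withDensity (fun t => ENNReal.ofReal (g t)) = ν) :
    ∫⁻ t, ENNReal.ofReal (g t) ∂κ = 1 := by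
  rw [← setLIntegral_univ, ← withDensity_apply _ MeasurableSet.univ, h, measure_univ]

lemma integrable_of_withDensity_eq [IsProbabilityMeasure ν] (hg : Measurable g) (hg0 : 0 ≤ᵐ[κ] g)
    (h : κ.withDensity (fun t => ENNReal.ofReal (g t)) = ν) : Integrable g κ :=
  (lintegral_ofReal_ne_top_iff_integrable hg.aestronglyMeasurable hg0).1
    ((lintegral_ofReal_eq_one_of_withDensity_eq h).trans_ne ENNReal.one_ne_top)

lemma integral_eq_one_of_withDensity_eq [IsProbabilityMeasure ν] (hg : Measurable g)
    (hg0 : 0 ≤ᵐ[κ] g) (h : κ.withDensity (fun t => ENNReal.ofReal (g t)) = ν) :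
    ∫ t, g t ∂κ = 1 := by
  rw [integral_eq_lintegral_of_nonneg_ae hg0 hg.aestronglyMeasurable,
    lintegral_ofReal_eq_one_of_withDensity_eq h, ENNReal.toReal_one]

lemma klDiv_ne_top_of_withDensity_eq [IsFiniteMeasure κ] (hg : Measurable g)
    (hpos : ∀ᵐ t ∂ν, 0 < g t) (hlog : Integrable (fun t => Real.log (g t)) ν)
    (h : κ.withDensity (fun t => ENNReal.ofReal (g t)) = ν) : klDiv ν κ ≠ ⊤ :=
  klDiv_ne_top (h ▸ withDensity_absolutelyContinuous _ _)
    (hlog.congr (llr_ae_eq_log_of_withDensity_eq hg hpos h).symm)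

lemma toReal_klDiv_of_withDensity_eq [IsProbabilityMeasure ν] [IsProbabilityMeasure κ]
    (hg : Measurable g) (hpos : ∀ᵐ t ∂ν, 0 < g t)
    (h : κ.withDensity (fun t => ENNReal.ofReal (g t)) = ν) :
    (klDiv ν κ).toReal = ∫ t, Real.log (g t) ∂ν := by
  rw [toReal_klDiv_of_measure_eq (h ▸ withDensity_absolutelyContinuous _ _) (by simp),
    integral_congr_ae (llr_ae_eq_log_of_withDensity_eq hg hpos h)]

end KullbackLeibler

section InverseTilt

variable {α : Type*} {mα : MeasurableSpace α} {ν : Measure α} {e : α}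

/-- The measure `ν / g`, completed by an atom at `e` to a probability measure when the mass of
`ν / g` is at most one. It is the minimizer of `klDiv ν` when `g` is the optimal dual function. -/
def inverseTilt (ν : Measure α) (g : α → ℝ≥0∞) (e : α) : Measure α :=
  ν.withDensity (fun t => (g t)⁻¹) + (1 - ∫⁻ t, (g t)⁻¹ ∂ν) • Measure.dirac e

variable {g : α → ℝ≥0∞}

lemma isProbabilityMeasure_inverseTilt (hmass : ∫⁻ t, (g t)⁻¹ ∂ν ≤ 1) :
    IsProbabilityMeasure (inverseTilt ν g e) := by
  constructor
  rw [inverseTilt, Measure.add_apply, Measure.smul_apply, withDensity_apply _ MeasurableSet.univ,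
    Measure.restrict_univ, measure_univ, smul_eq_mul, mul_one, add_tsub_cancel_of_le hmass]

lemma ae_mem_inverseTilt {S : Set α} (hS : MeasurableSet S) (hνS : ∀ᵐ t ∂ν, t ∈ S) (he : e ∈ S) :
    ∀ᵐ t ∂(inverseTilt ν g e), t ∈ S :=
  ae_add_measure_iff.2 ⟨(withDensity_absolutelyContinuous ν _).ae_le hνS,
    Measure.ae_smul_measure ((ae_dirac_iff hS).2 he) _⟩

lemma withDensity_inverseTilt (hg : Measurable g) (hg0 : ∀ᵐ t ∂ν, g t ≠ 0)
    (hgtop : ∀ᵐ t ∂ν, g t ≠ ⊤) (hslack : ∫⁻ t, (g t)⁻¹ ∂ν = 1 ∨ g e = 0) :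
    (inverseTilt ν g e).withDensity g = ν := by
  have hatom : ((1 - ∫⁻ t, (g t)⁻¹ ∂ν) • Measure.dirac e).withDensity g = 0 := by
    rcases hslack with hmass | hge
    · rw [hmass, tsub_self, zero_smul, withDensity_zero_left]
    · rw [withDensity_eq_zero_iff hg.aemeasurable]
      exact Measure.ae_smul_measure ((ae_dirac_iff (hg (measurableSet_singleton 0))).2 hge) _
  have htilt : (ν.withDensity fun t => (g t)⁻¹).withDensity g = ν := by
    simpa only [Pi.inv_def, inv_inv] using withDensity_inv_same hg.inv
      (hgtop.mono fun t => ENNReal.inv_ne_zero.2) (hg0.mono fun t => ENNReal.inv_ne_top.2)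
  rw [inverseTilt, withDensity_add_measure, hatom, htilt, add_zero]

end InverseTilt

section DualSlope

variable {α : Type*} {mα : MeasurableSpace α} {μ : Measure α} {U : α → ℝ} {c d l u : ℝ}

/-- Minus the derivative in `l` of the dual objective `∫ log (1 - l U)`, which is concave in `l`. -/
def dualSlope (μ : Measure α) (U : α → ℝ) (l : ℝ) : ℝ :=
  ∫ t, U t / (1 - l * U t) ∂μ

lemma one_sub_mul_le_one_sub_mul (hd : 0 ≤ d) (hl : l ∈ Icc 0 c) (hu : u ≤ d) :
    1 - c * d ≤ 1 - l * u :=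
  sub_le_sub_left ((mul_le_mul_of_nonneg_left hu hl.1).trans
    (mul_le_mul_of_nonneg_right hl.2 hd)) 1

lemma norm_div_one_sub_mul_le (hd : 0 ≤ d) (hcd : c * d < 1) (hl : l ∈ Icc 0 c) (hu : u ≤ d) :
    ‖u / (1 - l * u)‖ ≤ ‖u‖ / (1 - c * d) := by
  have hle := one_sub_mul_le_one_sub_mul hd hl hu
  have hpos : 0 < 1 - c * d := sub_pos.2 hcd
  rw [norm_div, Real.norm_of_nonneg (hpos.le.trans hle)]
  gcongr

lemma integrable_div_one_sub_mul (hU : Integrable U μ) (hd : 0 ≤ d) (hUd : ∀ᵐ t ∂μ, U t ≤ d)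
    (hl : 0 ≤ l) (hld : l * d < 1) : Integrable (fun t => U t / (1 - l * U t)) μ := by
  have hmeas : AEMeasurable (fun t => U t / (1 - l * U t)) μ :=
    hU.aemeasurable.div ((hU.aemeasurable.const_mul l).const_sub 1)
  refine (hU.norm.div_const (1 - l * d)).mono' hmeas.aestronglyMeasurable ?_
  filter_upwards [hUd] with t ht using norm_div_one_sub_mul_le hd hld (right_mem_Icc.2 hl) ht

lemma continuousOn_dualSlope (hU : Integrable U μ) (hd : 0 ≤ d) (hUd : ∀ᵐ t ∂μ, U t ≤ d)
    (hcd : c * d < 1) : ContinuousOn (dualSlope μ U) (Icc 0 c) := by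
  refine continuousOn_of_dominated (bound := fun t => ‖U t‖ / (1 - c * d)) ?_ ?_
    (hU.norm.div_const _) ?_
  · exact fun l _ => (hU.aemeasurable.div
      ((hU.aemeasurable.const_mul l).const_sub 1)).aestronglyMeasurable
  · intro l hl
    filter_upwards [hUd] with t ht using norm_div_one_sub_mul_le hd hcd hl ht
  · filter_upwards [hUd] with t ht
    refine continuousOn_const.div (by fun_prop) fun l hl => ?_
    exact ((sub_pos.2 hcd).trans_le (one_sub_mul_le_one_sub_mul hd hl ht)).ne'

lemma lintegral_inv_ofReal_one_sub_mul [IsProbabilityMeasure μ] (hU : Integrable U μ) (hd : 0 ≤ d)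
    (hUd : ∀ᵐ t ∂μ, U t ≤ d) (hl : 0 ≤ l) (hld : l * d < 1) :
    ∫⁻ t, (ENNReal.ofReal (1 - l * U t))⁻¹ ∂μ = ENNReal.ofReal (1 + l * dualSlope μ U l) := by
  have hint := integrable_div_one_sub_mul hU hd hUd hl hld
  have hpos : ∀ᵐ t ∂μ, 0 < 1 - l * U t := by
    filter_upwards [hUd] with t ht
    exact (sub_pos.2 hld).trans_le (one_sub_mul_le_one_sub_mul hd (right_mem_Icc.2 hl) ht)
  have hinv : ∀ᵐ t ∂μ, 1 + l * (U t / (1 - l * U t)) = (1 - l * U t)⁻¹ := by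
    filter_upwards [hpos] with t ht
    field_simp
    ring
  calc ∫⁻ t, (ENNReal.ofReal (1 - l * U t))⁻¹ ∂μ
      = ∫⁻ t, ENNReal.ofReal (1 + l * (U t / (1 - l * U t))) ∂μ := by
        refine lintegral_congr_ae ?_
        filter_upwards [hpos, hinv] with t htpos htinv
        rw [htinv, ENNReal.ofReal_inv_of_pos htpos]
    _ = ENNReal.ofReal (∫ t, (1 + l * (U t / (1 - l * U t))) ∂μ) := by
        refine (ofReal_integral_eq_lintegral_ofReal
          ((integrable_const _).add (hint.const_mul _)) ?_).symm
        filter_upwards [hpos, hinv] with t htpos htinv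
        exact (inv_pos.2 htpos).le.trans_eq htinv.symm
    _ = ENNReal.ofReal (1 + l * dualSlope μ U l) := by
        rw [integral_add (integrable_const _) (hint.const_mul _), integral_const_mul,
          integral_const, probReal_univ, one_smul, dualSlope]

lemma lintegral_inv_ofReal_one_sub_mul_le (hU : AEMeasurable U μ) {M : ℝ≥0∞} (hc : 0 < c)
    (hM : ∀ l ∈ Ioo 0 c, ∫⁻ t, (ENNReal.ofReal (1 - l * U t))⁻¹ ∂μ ≤ M) :
    ∫⁻ t, (ENNReal.ofReal (1 - c * U t))⁻¹ ∂μ ≤ M := by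
  have hlim (t : α) : Tendsto (fun l => (ENNReal.ofReal (1 - l * U t))⁻¹) (𝓝[<] c)
      (𝓝 (ENNReal.ofReal (1 - c * U t))⁻¹) :=
    ((ENNReal.continuous_ofReal.comp (by fun_prop : Continuous fun l => 1 - l * U t)).inv.tendsto
      c).mono_left nhdsWithin_le_nhds
  calc ∫⁻ t, (ENNReal.ofReal (1 - c * U t))⁻¹ ∂μ
      = ∫⁻ t, liminf (fun l => (ENNReal.ofReal (1 - l * U t))⁻¹) (𝓝[<] c) ∂μ :=
        lintegral_congr fun t => (hlim t).liminf_eq.symm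
    _ ≤ liminf (fun l => ∫⁻ t, (ENNReal.ofReal (1 - l * U t))⁻¹ ∂μ) (𝓝[<] c) :=
        lintegral_liminf_le' fun l => ((hU.const_mul l).const_sub 1).ennreal_ofReal.inv
    _ ≤ M := by
        refine liminf_le_of_frequently_le' (Eventually.frequently ?_)
        filter_upwards [Ioo_mem_nhdsLT hc] with l hl using hM l hl

/- The concave dual objective is either maximal at an interior zero of its slope, or still
increasing at the largest admissible multiplier `d⁻¹`. -/
lemma exists_multiplier [IsProbabilityMeasure μ] (hU : Integrable U μ) (hd : 0 < d)
    (hUd : ∀ᵐ t ∂μ, U t ≤ d) (hneg : ∫ t, U t ∂μ < 0) :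
    ∃ l, 0 < l ∧ l * d ≤ 1 ∧ ∫⁻ t, (ENNReal.ofReal (1 - l * U t))⁻¹ ∂μ ≤ 1 ∧
      (∫⁻ t, (ENNReal.ofReal (1 - l * U t))⁻¹ ∂μ = 1 ∨ l * d = 1) := by
  have hslope0 : dualSlope μ U 0 < 0 := by simpa [dualSlope] using hneg
  have hlt {c : ℝ} (hc : c < d⁻¹) : c * d < 1 := by rwa [← lt_inv_mul_iff₀' hd, mul_one]
  by_cases! hex : ∃ c ∈ Ioo 0 d⁻¹, 0 ≤ dualSlope μ U c
  · obtain ⟨c, hc, hslopec⟩ := hex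
    obtain ⟨l, hl, hslopel⟩ := intermediate_value_Icc hc.1.le
      (continuousOn_dualSlope hU hd.le hUd (hlt hc.2)) ⟨hslope0.le, hslopec⟩
    have hl0 : l ≠ 0 := by rintro rfl; exact hslope0.ne hslopel
    have hld := hlt (hl.2.trans_lt hc.2)
    have hmass : ∫⁻ t, (ENNReal.ofReal (1 - l * U t))⁻¹ ∂μ = 1 := by
      rw [lintegral_inv_ofReal_one_sub_mul hU hd.le hUd hl.1 hld, hslopel, mul_zero, add_zero,
        ENNReal.ofReal_one]
    exact ⟨l, hl.1.lt_of_ne' hl0, hld.le, hmass.le, Or.inl hmass⟩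
  · have hd1 : d⁻¹ * d = 1 := inv_mul_cancel₀ hd.ne'
    refine ⟨d⁻¹, inv_pos.2 hd, hd1.le, ?_, Or.inr hd1⟩
    refine lintegral_inv_ofReal_one_sub_mul_le hU.aemeasurable (inv_pos.2 hd) fun l hl => ?_
    rw [lintegral_inv_ofReal_one_sub_mul hU hd.le hUd hl.1.le (hlt hl.2), ENNReal.ofReal_le_one]
    linarith [mul_nonpos_of_nonneg_of_nonpos hl.1.le (hex l hl).le]

end DualSlope

section KLInf

variable {α : Type*} {mα : MeasurableSpace α} {S : Set α} {T : α → ℝ} {ν : Measure α}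

/-- The probability measures carried by `S` under which the statistic `T` has a mean. Integrability
is required so that the junk value `0` of a divergent integral never counts as a mean. -/
def integrableLaws (S : Set α) (T : α → ℝ) : Set (Measure α) :=
  {κ | IsProbabilityMeasure κ ∧ (∀ᵐ t ∂κ, t ∈ S) ∧ Integrable T κ}

/-- The least divergence from `ν` to a law on `S` whose mean of `T` is at least `x`: the upper
`KL_inf` of the bandit literature. -/
def klInfGE (S : Set α) (T : α → ℝ) (ν : Measure α) (x : ℝ) : ℝ≥0∞ :=
  ⨅ κ ∈ {κ ∈ integrableLaws S T | x ≤ ∫ t, T t ∂κ}, klDiv ν κ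

/-- The least divergence from `ν` to a law on `S` whose mean of `T` is at most `x`: the lower
`KL_inf` of the bandit literature. -/
def klInfLE (S : Set α) (T : α → ℝ) (ν : Measure α) (x : ℝ) : ℝ≥0∞ :=
  ⨅ κ ∈ {κ ∈ integrableLaws S T | ∫ t, T t ∂κ ≤ x}, klDiv ν κ

lemma klInfLE_eq_klInfGE_neg (x : ℝ) : klInfLE S T ν x = klInfGE S (-T) ν (-x) := by
  simp only [klInfLE, klInfGE, integrableLaws, mem_ofPred_eq, integrable_neg_iff, Pi.neg_apply,
    integral_neg, neg_le_neg_iff]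

variable {l z : ℝ}

lemma integrable_one_sub_mul_sub {κ : Measure α} [IsFiniteMeasure κ] (hT : Integrable T κ) :
    Integrable (fun t => 1 - l * (T t - z)) κ :=
  (integrable_const _).sub ((hT.sub (integrable_const _)).const_mul l)

lemma integral_one_sub_mul_sub {κ : Measure α} [IsProbabilityMeasure κ] (hT : Integrable T κ) :
    ∫ t, (1 - l * (T t - z)) ∂κ = 1 - l * ((∫ t, T t ∂κ) - z) := by
  have hsub : Integrable (fun t => T t - z) κ := hT.sub (integrable_const _)
  rw [integral_sub (integrable_const _) (hsub.const_mul l), integral_const_mul,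
    integral_sub hT (integrable_const _)]
  simp only [integral_const, probReal_univ, one_smul]

lemma ofReal_integral_log_sub_log_le_klInfGE [IsProbabilityMeasure ν] (hl : 0 ≤ l)
    (hL0 : ∀ t ∈ S, 0 ≤ 1 - l * (T t - z)) (hpos : ∀ᵐ t ∂ν, 0 < 1 - l * (T t - z))
    (hlog : Integrable (fun t => Real.log (1 - l * (T t - z))) ν) (x : ℝ) :
    ENNReal.ofReal ((∫ t, Real.log (1 - l * (T t - z)) ∂ν) - Real.log (1 + l * (z - x))) ≤
      klInfGE S T ν x := by
  refine le_iInf₂ fun κ ⟨⟨hκ, hκS, hκT⟩, hmean⟩ => ?_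
  refine ofReal_integral_log_sub_log_integral_le_klDiv (integrable_one_sub_mul_sub hκT)
    (hκS.mono hL0) hpos hlog ?_
  rw [integral_one_sub_mul_sub hκT]
  linarith [mul_le_mul_of_nonneg_left hmean hl]

lemma integrable_and_integral_eq_of_withDensity_eq [IsProbabilityMeasure ν] {κ : Measure α}
    [IsProbabilityMeasure κ] (hT : Measurable T) (hl : l ≠ 0)
    (hL0 : ∀ᵐ t ∂κ, 0 ≤ 1 - l * (T t - z))
    (h : κ.withDensity (fun t => ENNReal.ofReal (1 - l * (T t - z))) = ν) :
    Integrable T κ ∧ ∫ t, T t ∂κ = z := by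
  have hLmeas : Measurable fun t => 1 - l * (T t - z) := by fun_prop
  have hLint := integrable_of_withDensity_eq hLmeas hL0 h
  have hTint : Integrable T κ := by
    refine (((integrable_const 1).sub hLint).const_mul l⁻¹ |>.add (integrable_const z)).congr
      (ae_of_all _ fun t => ?_)
    simp [hl]
  have hmean := integral_eq_one_of_withDensity_eq hLmeas hL0 h
  rw [integral_one_sub_mul_sub hTint, sub_eq_self, mul_eq_zero] at hmean
  exact ⟨hTint, sub_eq_zero.1 (hmean.resolve_left hl)⟩

lemma exists_mem_integrableLaws_toReal_klDiv_eq [IsProbabilityMeasure ν] (hS : MeasurableSet S)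
    (hT : Measurable T) (hνS : ∀ᵐ t ∂ν, t ∈ S) {e : α} (he : e ∈ S) (hl : l ≠ 0)
    (hL0 : ∀ t ∈ S, 0 ≤ 1 - l * (T t - z)) (hpos : ∀ᵐ t ∂ν, 0 < 1 - l * (T t - z))
    (hlog : Integrable (fun t => Real.log (1 - l * (T t - z))) ν)
    (hmass : ∫⁻ t, (ENNReal.ofReal (1 - l * (T t - z)))⁻¹ ∂ν ≤ 1)
    (hslack : ∫⁻ t, (ENNReal.ofReal (1 - l * (T t - z)))⁻¹ ∂ν = 1 ∨ l * (T e - z) = 1) :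
    ∃ κ ∈ integrableLaws S T, ∫ t, T t ∂κ = z ∧ klDiv ν κ ≠ ⊤ ∧
      (klDiv ν κ).toReal = ∫ t, Real.log (1 - l * (T t - z)) ∂ν := by
  set κ := inverseTilt ν (fun t => ENNReal.ofReal (1 - l * (T t - z))) e
  have hLmeas : Measurable fun t => 1 - l * (T t - z) := by fun_prop
  have hκ : IsProbabilityMeasure κ := isProbabilityMeasure_inverseTilt hmass
  have hκS : ∀ᵐ t ∂κ, t ∈ S := ae_mem_inverseTilt hS hνS he
  have hdensity : κ.withDensity (fun t => ENNReal.ofReal (1 - l * (T t - z))) = ν :=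
    withDensity_inverseTilt hLmeas.ennreal_ofReal
      (hpos.mono fun _ ht => (ENNReal.ofReal_pos.2 ht).ne')
      (ae_of_all _ fun _ => ENNReal.ofReal_ne_top)
      (hslack.imp_right fun h => by rw [h, sub_self, ENNReal.ofReal_zero])
  obtain ⟨hκT, hmean⟩ :=
    integrable_and_integral_eq_of_withDensity_eq hT hl (hκS.mono hL0) hdensity
  exact ⟨κ, ⟨hκ, hκS, hκT⟩, hmean, klDiv_ne_top_of_withDensity_eq hLmeas hpos hlog hdensity,
    toReal_klDiv_of_withDensity_eq hLmeas hpos hdensity⟩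

lemma exists_log_minorant_klInfGE [IsProbabilityMeasure ν] (hS : MeasurableSet S)
    (hT : Measurable T) (hνS : ∀ᵐ t ∂ν, t ∈ S) (hTν : Integrable T ν) {e : α} (he : e ∈ S)
    (hmax : IsMaxOn T S e) (hz : z ∈ Ioo (∫ t, T t ∂ν) (T e)) :
    ∃ l > 0, l * (T e - z) ≤ 1 ∧ ∃ A, 0 ≤ A ∧ klInfGE S T ν z ≤ ENNReal.ofReal A ∧
      ∀ x, ENNReal.ofReal (A - Real.log (1 + l * (z - x))) ≤ klInfGE S T ν x := by
  have hneg : ∫ t, (T t - z) ∂ν < 0 := by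
    rw [integral_sub hTν (integrable_const _), integral_const, probReal_univ, one_smul]
    exact sub_neg.2 hz.1
  obtain ⟨l, hl, hle, hmass, hslack⟩ := exists_multiplier (hTν.sub (integrable_const z))
    (sub_pos.2 hz.2) (hνS.mono fun t ht => sub_le_sub_right (hmax ht) z) hneg
  have hL0 (t) (ht : t ∈ S) : 0 ≤ 1 - l * (T t - z) :=
    sub_nonneg.2 ((mul_le_mul_of_nonneg_left (sub_le_sub_right (hmax ht) z) hl.le).trans hle)
  have hmass_ne_top := ne_top_of_le_ne_top ENNReal.one_ne_top hmass
  have hLint : Integrable (fun t => 1 - l * (T t - z)) ν := integrable_one_sub_mul_sub hTν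
  have hpos := ae_pos_of_lintegral_inv_ofReal_ne_top hLint.aemeasurable hmass_ne_top
  have hlog := integrable_log_of_integrable_inv hLint
    (integrable_inv_of_lintegral_inv_ofReal_ne_top hLint.aemeasurable hmass_ne_top) hpos
  obtain ⟨κ, hκ, hmean, hfin, hvalue⟩ :=
    exists_mem_integrableLaws_toReal_klDiv_eq hS hT hνS he hl.ne' hL0 hpos hlog hmass hslack
  refine ⟨l, hl, hle, (klDiv ν κ).toReal, ENNReal.toReal_nonneg, ?_, ?_⟩
  · exact (ENNReal.ofReal_toReal hfin).symm ▸ iInf₂_le κ ⟨hκ, hmean.ge⟩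
  · exact hvalue ▸ ofReal_integral_log_sub_log_le_klInfGE hl.le hL0 hpos hlog

lemma klInfGE_eq_top_of_isMaxOn [IsProbabilityMeasure ν] {e : α} (hmax : IsMaxOn T S e)
    (hlt : ∫ t, T t ∂ν < T e) : klInfGE S T ν (T e) = ⊤ := by
  refine iInf₂_eq_top.2 fun κ ⟨⟨hκ, hκS, hκT⟩, hmean⟩ => ?_
  have hle : ∀ᵐ t ∂κ, T t ≤ T e := hκS.mono fun t ht => hmax ht
  have hconst : ∀ᵐ t ∂κ, T t = T e := by
    refine (integral_eq_iff_of_ae_le hκT (integrable_const _) hle).1 (le_antisymm ?_ ?_)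
    · exact integral_mono_ae hκT (integrable_const _) hle
    · simpa using hmean
  by_contra htop
  have hνconst : ∀ᵐ t ∂ν, T t = T e := (klDiv_ne_top_iff.1 htop).1.ae_le hconst
  refine hlt.ne ?_
  rw [integral_congr_ae hνconst, integral_const, probReal_univ, one_smul]

theorem strictConvexOn_klInfGE [IsProbabilityMeasure ν] (hS : MeasurableSet S)
    (hT : Measurable T) (hνS : ∀ᵐ t ∂ν, t ∈ S) (hTν : Integrable T ν) {e : α} (he : e ∈ S)
    (hmax : IsMaxOn T S e) :
    StrictConvexOn ℝ≥0 (Ioc (∫ t, T t ∂ν) (T e)) (klInfGE S T ν) := by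
  rcases le_or_gt (T e) (∫ t, T t ∂ν) with hle | hlt
  · rw [Ioc_eq_empty hle.not_gt]
    exact ⟨convex_empty, fun x hx => hx.elim⟩
  have hexists {z : ℝ} (hz : z ∈ Ioo (∫ t, T t ∂ν) (T e)) :=
    exists_log_minorant_klInfGE hS hT hνS hTν he hmax hz
  refine strictConvexOn_Ioc_of_eq_top ?_ (fun z hz => ?_) (klInfGE_eq_top_of_isMaxOn hmax hlt)
  · refine strictConvexOn_of_strictConvexOn_minorant (convex_Ioo _ _) fun z hz => ?_
    obtain ⟨l, hl, hle, A, hA, hattain, hminorant⟩ := hexists hz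
    have hpos (x) (hx : x ∈ Ioo (∫ t, T t ∂ν) (T e)) : 0 < 1 + l * (z - x) := by
      linarith [mul_lt_mul_of_pos_left hx.2 hl]
    exact ⟨_, strictConvexOn_const_sub_log_affine (A := A) (convex_Ioo _ _) hl.ne' hpos,
      by simpa using hA, by simpa using hattain, fun x _ => hminorant x⟩
  · obtain ⟨l, -, -, A, -, hattain, -⟩ := hexists hz
    exact ne_top_of_le_ne_top ENNReal.ofReal_ne_top hattain

theorem strictConvexOn_klInfLE [IsProbabilityMeasure ν] (hS : MeasurableSet S)
    (hT : Measurable T) (hνS : ∀ᵐ t ∂ν, t ∈ S) (hTν : Integrable T ν) {e : α} (he : e ∈ S)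
    (hmin : IsMinOn T S e) :
    StrictConvexOn ℝ≥0 (Ico (T e) (∫ t, T t ∂ν)) (klInfLE S T ν) := by
  have hconvex := strictConvexOn_klInfGE hS hT.neg hνS hTν.neg he hmin.neg
  simp only [Pi.neg_apply, integral_neg] at hconvex
  exact funext klInfLE_eq_klInfGE_neg ▸ strictConvexOn_Ico_comp_neg hconvex

theorem stmt_16_general [IsProbabilityMeasure ν] (hS : MeasurableSet S) (hT : Measurable T)
    (hνS : ∀ᵐ t ∂ν, t ∈ S) {p q : α} (hp : p ∈ S) (hmin : IsMinOn T S p) (hq : q ∈ S)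
    (hmax : IsMaxOn T S q) :
    StrictConvexOn ℝ≥0 (Ioc (∫ t, T t ∂ν) (T q)) (klInfGE S T ν) ∧
      StrictConvexOn ℝ≥0 (Ico (T p) (∫ t, T t ∂ν)) (klInfLE S T ν) := by
  have hTν : Integrable T ν :=
    .of_mem_Icc (T p) (T q) hT.aemeasurable (hνS.mono fun t ht => ⟨hmin ht, hmax ht⟩)
  exact ⟨strictConvexOn_klInfGE hS hT hνS hTν hq hmax,
    strictConvexOn_klInfLE hS hT hνS hTν hp hmin⟩

end KLInf

section UnitInterval

lemma Bset_eq_integrableLaws : Bset = integrableLaws (Icc 0 1) id := by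
  ext κ
  refine ⟨fun ⟨hκ, hκI⟩ => ⟨hκ, hκI, ?_⟩, fun ⟨hκ, hκI, _⟩ => ⟨hκ, hκI⟩⟩
  exact .of_mem_Icc 0 1 aemeasurable_id hκI

lemma KLdiv_eq_klDiv (μ ν : Measure ℝ) [IsProbabilityMeasure μ] [IsProbabilityMeasure ν] :
    KLdiv μ ν = klDiv μ ν := by
  simp [KLdiv, klDiv_def]

lemma KLinfU_eq_klInfGE (ν : Measure ℝ) [IsProbabilityMeasure ν] :
    KLinfU ν = klInfGE (Icc 0 1) id ν := by
  funext x
  rw [KLinfU, klInfGE, Bset_eq_integrableLaws]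
  exact biInf_congr fun κ ⟨⟨hκ, _⟩, _⟩ => KLdiv_eq_klDiv ν κ

lemma KLinfL_eq_klInfLE (ν : Measure ℝ) [IsProbabilityMeasure ν] :
    KLinfL ν = klInfLE (Icc 0 1) id ν := by
  funext x
  rw [KLinfL, klInfLE, Bset_eq_integrableLaws]
  exact biInf_congr fun κ ⟨⟨hκ, _⟩, _⟩ => KLdiv_eq_klDiv ν κ

lemma lt_ofReal_combo_of_strictConvexOn {s : Set ℝ} {f : ℝ → ℝ≥0∞} (hf : StrictConvexOn ℝ≥0 s f) :
    ∀ x ∈ s, ∀ y ∈ s, x ≠ y → ∀ a b : ℝ, 0 < a → 0 < b → a + b = 1 →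
      f (a * x + b * y) < ENNReal.ofReal a * f x + ENNReal.ofReal b * f y := by
  intro x hx y hy hxy a b ha hb hab
  lift a to ℝ≥0 using ha.le
  lift b to ℝ≥0 using hb.le
  simpa only [NNReal.smul_def, ENNReal.smul_def, smul_eq_mul, ENNReal.ofReal_coe_nnreal] using
    hf.2 hx hy hxy (mod_cast ha) (mod_cast hb) (mod_cast hab)

end UnitInterval

/-- Strict convexity of `KL_inf` for bounded distributions: for `ν ∈ B` with
mean `m(ν) ∈ (0,1)`, `x ↦ KL_inf^U(ν,B,x)` is strictly convex on `(m(ν),1]` and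
`x ↦ KL_inf^L(ν,B,x)` is strictly convex on `[0,m(ν))` (with values in `[0,∞]`, strict
convexity is expressed pointwise). -/
theorem stmt_16 (ν : Measure ℝ) (hν : ν ∈ Bset) (hmean : mmean ν ∈ Set.Ioo (0:ℝ) 1) :
    (∀ x ∈ Set.Ioc (mmean ν) 1, ∀ y ∈ Set.Ioc (mmean ν) 1, x ≠ y →
      ∀ a b : ℝ, 0 < a → 0 < b → a + b = 1 →
        KLinfU ν (a * x + b * y) <
          ENNReal.ofReal a * KLinfU ν x + ENNReal.ofReal b * KLinfU ν y) ∧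
    (∀ x ∈ Set.Ico (0:ℝ) (mmean ν), ∀ y ∈ Set.Ico (0:ℝ) (mmean ν), x ≠ y →
      ∀ a b : ℝ, 0 < a → 0 < b → a + b = 1 →
        KLinfL ν (a * x + b * y) <
          ENNReal.ofReal a * KLinfL ν x + ENNReal.ofReal b * KLinfL ν y) := by
  have := hν.1
  obtain ⟨hU, hL⟩ := stmt_16_general (p := 0) (q := 1) measurableSet_Icc measurable_id hν.2
    (by simp) (fun t ht => ht.1) (by simp) (fun t ht => ht.2)
  rw [← KLinfU_eq_klInfGE] at hU
  rw [← KLinfL_eq_klInfLE] at hL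
  exact ⟨lt_ofReal_combo_of_strictConvexOn hU, lt_ofReal_combo_of_strictConvexOn hL⟩
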